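/- Let a, b, c, p > 0, let B be Beta(a,b), W be Gamma(c/p, 1), and E a standard exponential, all independent. Then P(B^p · W > w | W > w) ∼ P(B^p (w + E) > w) as w → ∞. -/

import Mathlib

/-!
Write `r = c / p` and `G t = P(B ^ p * (1 + t) > 1)`. Substituting `y = w + z` in the Gamma
density shows that

* `P(B ^ p * W > w, W > w) = k * ∫ (1 + z / w) ^ (r - 1) * exp (-z) * G (z / w) dz`,
* `P(W > w) = k * ∫ (1 + z / w) ^ (r - 1) * exp (-z) dz`,
* `P(B ^ p * (w + E) > w) = ∫ exp (-z) * G (z / w) dz`,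

with the same constant `k = w ^ (r - 1) * exp (-w) / Γ(r)` and integrals over `z > 0`
(`lintegral_gammaM`, `lintegral_expM`, `betaM_section`). The theorem therefore says that the weight
`(1 + z / w) ^ (r - 1)` is asymptotically negligible both against `G` and against the constant `1`,
which are two instances of `tilted_ratio_tendsto_one`.

That lemma holds for every monotone `G` with values in `[0, 1]` that is positive on `(0, ∞)`; no
asymptotics of the Beta tail are needed. The weight is within `ε` of `1` as long as `z ≤ δ w`.
The range `z > δ w` contributes `O(exp (-5 δ w / 8))`, whereas monotonicity bounds the denominator
below by `G (δ / 2) * exp (-δ w / 2)`, which is exponentially larger.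
-/

open MeasureTheory Filter Real Asymptotics

/-- The Beta(a,b) distribution on ℝ, via its density. -/
noncomputable def betaM (a b : ℝ) : Measure ℝ :=
  volume.withDensity fun x => ENNReal.ofReal
    (if 0 < x ∧ x < 1 then
      x ^ (a - 1) * (1 - x) ^ (b - 1) * (Real.Gamma (a + b) / (Real.Gamma a * Real.Gamma b))
    else 0)

/-- The generalized gamma GG(c,p) distribution on ℝ, via its density. -/
noncomputable def genGammaM (c p : ℝ) : Measure ℝ :=
  volume.withDensity fun x => ENNReal.ofReal
    (if 0 < x then p / Real.Gamma (c / p) * x ^ (c - 1) * Real.exp (-(x ^ p)) else 0)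

/-- The Gamma(r,1) distribution on ℝ, via its density. -/
noncomputable def gammaM (r : ℝ) : Measure ℝ :=
  volume.withDensity fun x => ENNReal.ofReal
    (if 0 < x then x ^ (r - 1) * Real.exp (-x) / Real.Gamma r else 0)

/-- The standard exponential distribution on ℝ, via its density. -/
noncomputable def expM : Measure ℝ :=
  volume.withDensity fun x => ENNReal.ofReal (if 0 < x then Real.exp (-x) else 0)


open ProbabilityTheory Set

/-! ### Negligibility of a power weight -/

/-- A power weight `(1 + z / w) ^ s` does not affect the integral of `exp (-z) * G (z / w)` to
leading order, for any monotone `G` into `[0, 1]` that is positive on `(0, ∞)`. -/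
lemma tilted_ratio_tendsto_one (G : ℝ → ℝ) (hmono : Monotone G) (h0 : ∀ t, 0 ≤ G t)
    (h1 : ∀ t, G t ≤ 1) (hpos : ∀ t, 0 < t → 0 < G t) (s : ℝ) :
    Tendsto (fun w : ℝ => (∫ z in Ioi (0 : ℝ), (1 + z / w) ^ s * exp (-z) * G (z / w)) /
      ∫ z in Ioi (0 : ℝ), exp (-z) * G (z / w)) atTop (nhds 1) := by
  have hGm : Measurable G := hmono.measurable
  have hint : ∀ k : ℝ, 0 < k → IntegrableOn (fun z : ℝ => exp (-k * z)) (Ioi 0) :=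
    fun k hk => exp_neg_integrableOn_Ioi 0 hk
  have hD : ∀ w : ℝ, IntegrableOn (fun z : ℝ => exp (-z) * G (z / w)) (Ioi 0) := by
    intro w
    refine (hint 1 one_pos).mono' (by fun_prop) (ae_of_all _ fun z => ?_)
    rw [norm_eq_abs, abs_of_nonneg (mul_nonneg (exp_pos _).le (h0 _)), neg_one_mul]
    exact mul_le_of_le_one_right (exp_pos _).le (h1 _)
  -- For `w ≥ 4|s|` the weight costs at most a quarter of the exponential decay.
  have hgrow : ∀ w z : ℝ, 4 * |s| + 1 ≤ w → 0 < z → (1 + z / w) ^ s ≤ exp (z / 4) := by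
    intro w z hw hz
    have hw0 : 0 < w := by linarith [abs_nonneg s]
    have hzw : 0 < z / w := by positivity
    calc (1 + z / w) ^ s ≤ (1 + z / w) ^ |s| :=
          rpow_le_rpow_of_exponent_le (by linarith) (le_abs_self s)
      _ ≤ (exp (z / w)) ^ |s| :=
          rpow_le_rpow (by linarith) (by linarith [add_one_le_exp (z / w)]) (abs_nonneg s)
      _ = exp (z / w * |s|) := by rw [← exp_mul]
      _ ≤ exp (z / 4) := by
          apply exp_le_exp.2
          rw [div_mul_eq_mul_div, div_le_iff₀ hw0]
          nlinarith [abs_nonneg s]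
  have hI : ∀ w : ℝ, 4 * |s| + 1 ≤ w →
      IntegrableOn (fun z : ℝ => (1 + z / w) ^ s * exp (-z) * G (z / w)) (Ioi 0) := by
    intro w hw
    have hw0 : 0 < w := by linarith [abs_nonneg s]
    refine (hint (3 / 4) (by norm_num)).mono' (by fun_prop) ?_
    refine (ae_restrict_iff' measurableSet_Ioi).2 (ae_of_all _ fun z (hz : 0 < z) => ?_)
    have hr : 0 ≤ (1 + z / w) ^ s := by positivity
    rw [norm_eq_abs, abs_of_nonneg (mul_nonneg (mul_nonneg hr (exp_pos _).le) (h0 _))]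
    calc (1 + z / w) ^ s * exp (-z) * G (z / w) ≤ (1 + z / w) ^ s * exp (-z) :=
          mul_le_of_le_one_right (by positivity) (h1 _)
      _ ≤ exp (z / 4) * exp (-z) := by gcongr; exact hgrow w z hw hz
      _ = exp (-(3 / 4) * z) := by rw [← exp_add]; ring_nf
  rw [Metric.tendsto_nhds]
  intro ε hε
  obtain ⟨δ, hδ, hclose⟩ : ∃ δ > 0, ∀ t : ℝ, 0 ≤ t → t ≤ δ → |(1 + t) ^ s - 1| ≤ ε / 2 := by
    have hc : ContinuousAt (fun t : ℝ => (1 + t) ^ s) 0 := by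
      refine ContinuousAt.rpow_const (by fun_prop) (Or.inl (by norm_num))
    obtain ⟨η, hη, h⟩ := Metric.continuousAt_iff.1 hc (ε / 2) (by positivity)
    refine ⟨η / 2, by positivity, fun t ht htη => ?_⟩
    have := h (x := t) (by rw [dist_zero_right, norm_eq_abs, abs_of_nonneg ht]; linarith)
    simpa [dist_eq] using this.le
  have hg := hpos (δ / 2) (by positivity)
  set g := G (δ / 2) with hgdef
  have hlim : Tendsto (fun w : ℝ => 8 / g * exp (-(δ / 8 * w))) atTop (nhds 0) := by
    have h := (tendsto_exp_neg_atTop_nhds_zero.comp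
      (tendsto_id.const_mul_atTop (show 0 < δ / 8 by positivity))).const_mul (8 / g)
    simpa using h
  filter_upwards [eventually_ge_atTop (4 * |s| + 1), hlim.eventually (gt_mem_nhds (half_pos hε))]
    with w hw hsmall
  have hw0 : 0 < w := by linarith [abs_nonneg s]
  set D := ∫ z in Ioi (0 : ℝ), exp (-z) * G (z / w) with hDdef
  set I := ∫ z in Ioi (0 : ℝ), (1 + z / w) ^ s * exp (-z) * G (z / w) with hIdef
  have hDlow : g * exp (-(δ / 2 * w)) ≤ D := by
    calc g * exp (-(δ / 2 * w)) = ∫ z in Ioi (δ / 2 * w), exp (-z) * g := by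
          rw [integral_mul_const, integral_exp_neg_Ioi, mul_comm]
      _ ≤ ∫ z in Ioi (δ / 2 * w), exp (-z) * G (z / w) := by
          refine setIntegral_mono_on ?_ ((hD w).mono_set (Ioi_subset_Ioi (by positivity)))
            measurableSet_Ioi fun z (hz : _ < z) => ?_
          · refine Integrable.mul_const ?_ _
            simpa [IntegrableOn] using exp_neg_integrableOn_Ioi (δ / 2 * w) one_pos
          · have : δ / 2 ≤ z / w := by rw [le_div_iff₀ hw0]; exact hz.le
            exact mul_le_mul_of_nonneg_left (hmono this) (exp_pos _).le
      _ ≤ D := by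
          refine setIntegral_mono_set (hD w) ?_ ?_
          · exact ae_of_all _ fun z => mul_nonneg (exp_pos _).le (h0 _)
          · exact (Ioi_subset_Ioi (by positivity)).eventuallyLE
  have hDpos : 0 < D := lt_of_lt_of_le (by positivity) hDlow
  -- `exp (-3z/4) ≤ exp (-5δw/8) * exp (-z/8)` for `z > δw`, which bounds the far range by one
  -- integrable function on the whole half-line.
  have hdiff : |I - D| ≤ ε / 2 * D + 8 * exp (-(5 * δ / 8 * w)) := by
    have hpt : ∀ z ∈ Ioi (0 : ℝ),
        ‖(1 + z / w) ^ s * exp (-z) * G (z / w) - exp (-z) * G (z / w)‖ ≤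
        ε / 2 * (exp (-z) * G (z / w)) + exp (-(5 * δ / 8 * w)) * exp (-(1 / 8) * z) := by
      intro z hz
      have hz : 0 < z := hz
      have hnn : 0 ≤ exp (-z) * G (z / w) := mul_nonneg (exp_pos _).le (h0 _)
      rw [norm_eq_abs, show (1 + z / w) ^ s * exp (-z) * G (z / w) - exp (-z) * G (z / w) =
        ((1 + z / w) ^ s - 1) * (exp (-z) * G (z / w)) by ring, abs_mul, abs_of_nonneg hnn]
      rcases le_or_gt (z / w) δ with hzδ | hzδ
      · exact le_add_of_le_of_nonneg
          (mul_le_mul_of_nonneg_right (hclose _ (by positivity) hzδ) hnn) (by positivity)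
      · refine le_add_of_nonneg_of_le (by positivity) ?_
        have hzw : δ * w < z := (lt_div_iff₀ hw0).1 hzδ
        have hr : 0 ≤ (1 + z / w) ^ s := by positivity
        have hone : 1 ≤ exp (z / 4) := one_le_exp (by positivity)
        have habs : |(1 + z / w) ^ s - 1| ≤ exp (z / 4) := by
          rw [abs_le]
          constructor <;> linarith [hgrow w z hw hz]
        calc |(1 + z / w) ^ s - 1| * (exp (-z) * G (z / w))
            ≤ exp (z / 4) * exp (-z) := by
              refine mul_le_mul habs ?_ hnn (exp_pos _).le
              exact mul_le_of_le_one_right (exp_pos _).le (h1 _)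
          _ ≤ _ := by
              rw [← exp_add, ← exp_add]
              apply exp_le_exp.2
              nlinarith
    have hb : IntegrableOn (fun z => ε / 2 * (exp (-z) * G (z / w)) +
        exp (-(5 * δ / 8 * w)) * exp (-(1 / 8) * z)) (Ioi 0) :=
      ((hD w).const_mul _).add ((hint (1 / 8) (by norm_num)).const_mul _)
    rw [hIdef, hDdef, ← integral_sub (hI w hw) (hD w), ← norm_eq_abs]
    refine (norm_integral_le_integral_norm _).trans ?_
    refine (setIntegral_mono_on ((hI w hw).sub (hD w)).norm hb measurableSet_Ioi hpt).trans ?_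
    rw [integral_add ((hD w).const_mul _) ((hint (1 / 8) (by norm_num)).const_mul _),
      integral_const_mul, integral_const_mul, integral_exp_mul_Ioi (by norm_num)]
    apply le_of_eq
    simp
    ring
  rw [dist_eq, show I / D - 1 = (I - D) / D by field_simp, abs_div, abs_of_pos hDpos,
    div_lt_iff₀ hDpos]
  have hexp : exp (-(5 * δ / 8 * w)) = exp (-(δ / 8 * w)) * exp (-(δ / 2 * w)) := by
    rw [← exp_add]; ring_nf
  have h3 : 8 * exp (-(5 * δ / 8 * w)) ≤ 8 / g * exp (-(δ / 8 * w)) * D := by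
    calc 8 * exp (-(5 * δ / 8 * w)) = 8 / g * exp (-(δ / 8 * w)) * (g * exp (-(δ / 2 * w))) := by
          rw [hexp]; field_simp
      _ ≤ _ := by gcongr
  nlinarith

/-! ### The three distributions -/

lemma measurable_betaDensity (a b : ℝ) : Measurable fun x : ℝ => ENNReal.ofReal
    (if 0 < x ∧ x < 1 then
      x ^ (a - 1) * (1 - x) ^ (b - 1) * (Real.Gamma (a + b) / (Real.Gamma a * Real.Gamma b))
    else 0) :=
  (Measurable.ite measurableSet_Ioo (by fun_prop) (by fun_prop)).ennreal_ofReal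

lemma isProbabilityMeasure_betaM {a b : ℝ} (ha : 0 < a) (hb : 0 < b) :
    IsProbabilityMeasure (betaM a b) := by
  constructor
  rw [betaM, withDensity_apply _ MeasurableSet.univ, setLIntegral_univ,
    ← lintegral_betaPDF_eq_one ha hb]
  congr with x
  rw [betaPDF_eq, beta, one_div_div]
  congr 2
  ring_nf

lemma isProbabilityMeasure_gammaM {r : ℝ} (hr : 0 < r) : IsProbabilityMeasure (gammaM r) := by
  constructor
  rw [gammaM, withDensity_apply _ MeasurableSet.univ, setLIntegral_univ,
    ← lintegral_gammaPDF_eq_one hr one_pos]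
  refine lintegral_congr_ae ?_
  filter_upwards [compl_mem_ae_iff.2 (measure_singleton (μ := volume) (0 : ℝ))] with x hx
  have hx : x ≠ 0 := hx
  rw [gammaPDF_eq]
  congr 1
  rcases lt_or_gt_of_ne hx with h | h
  · rw [if_neg h.not_gt, if_neg h.not_ge]
  · rw [if_pos h, if_pos h.le, one_rpow, one_mul]
    ring

lemma isProbabilityMeasure_expM : IsProbabilityMeasure expM := by
  have : expM = gammaM 1 := by simp [expM, gammaM]
  rw [this]
  exact isProbabilityMeasure_gammaM one_pos

lemma betaM_ae_mem_Ioo (a b : ℝ) : ∀ᵐ x ∂betaM a b, x ∈ Ioo (0 : ℝ) 1 := by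
  rw [betaM, ae_withDensity_iff (measurable_betaDensity a b)]
  refine ae_of_all _ fun x hx => ?_
  by_contra h
  exact hx (by rw [if_neg (show ¬(0 < x ∧ x < 1) from h), ENNReal.ofReal_zero])

lemma betaM_Ioo_pos {a b : ℝ} (ha : 0 < a) (hb : 0 < b) {u : ℝ} (hu : 0 ≤ u) (hu1 : u < 1) :
    0 < betaM a b (Ioo u 1) := by
  rw [pos_iff_ne_zero, betaM, Ne, withDensity_apply_eq_zero (measurable_betaDensity a b)]
  have : Ioo u 1 ⊆ {x : ℝ | ENNReal.ofReal
    (if 0 < x ∧ x < 1 then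
      x ^ (a - 1) * (1 - x) ^ (b - 1) * (Real.Gamma (a + b) / (Real.Gamma a * Real.Gamma b))
    else 0) ≠ 0} ∩ Ioo u 1 := by
    intro x hx
    have hx0 : 0 < x := hu.trans_lt hx.1
    have hx1 : 0 < 1 - x := sub_pos.2 hx.2
    have := Gamma_pos_of_pos ha
    have := Gamma_pos_of_pos hb
    have := Gamma_pos_of_pos (add_pos ha hb)
    refine ⟨?_, hx⟩
    simp only [mem_ofPred_eq, if_pos (And.intro hx0 hx.2)]
    exact (ENNReal.ofReal_pos.2 (by positivity)).ne'
  intro h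
  have h2 := measure_mono_null this h
  rw [Real.volume_Ioo, ENNReal.ofReal_eq_zero] at h2
  linarith

/-- The tail function `t ↦ P(B ^ p * (1 + t) > 1)` of a Beta variable `B`. The constraint `0 < x` is
automatic almost surely; it is kept because `x ^ p` is a junk value for `x < 0`, and without it
monotonicity in `t` could fail setwise. -/
noncomputable def betaTail (a b p t : ℝ) : ℝ :=
  (betaM a b).real {x | 0 < x ∧ 1 < x ^ p * (1 + t)}

lemma betaTail_mono {a b : ℝ} (ha : 0 < a) (hb : 0 < b) (p : ℝ) : Monotone (betaTail a b p) := by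
  have := isProbabilityMeasure_betaM ha hb
  intro s t hst
  refine measureReal_mono fun x hx => ⟨hx.1, hx.2.trans_le ?_⟩
  have := rpow_pos_of_pos hx.1 p
  gcongr

lemma betaTail_pos {a b p : ℝ} (ha : 0 < a) (hb : 0 < b) (hp : 0 < p) {t : ℝ} (ht : 0 < t) :
    0 < betaTail a b p t := by
  have := isProbabilityMeasure_betaM ha hb
  have hu0 : 0 < (1 + t)⁻¹ := by positivity
  have hu : (1 + t)⁻¹ < 1 := inv_lt_one_of_one_lt₀ (by linarith)
  refine ENNReal.toReal_pos (ne_of_gt ?_) (measure_ne_top _ _)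
  refine (betaM_Ioo_pos ha hb (rpow_nonneg hu0.le p⁻¹)
    (rpow_lt_one hu0.le hu (by positivity))).trans_le (measure_mono fun x hx => ?_)
  have hx0 : 0 < x := (rpow_pos_of_pos hu0 _).trans hx.1
  refine ⟨hx0, ?_⟩
  have h : (1 + t)⁻¹ < x ^ p := by
    have := rpow_lt_rpow (rpow_nonneg hu0.le p⁻¹) hx.1 hp
    rwa [rpow_inv_rpow hu0.le hp.ne'] at this
  rwa [inv_lt_iff_one_lt_mul₀ (by positivity)] at h

/-- The conditional probability of `B ^ p * (w + z) > w` depends only on `z / w`. -/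
lemma betaM_section {a b : ℝ} (ha : 0 < a) (hb : 0 < b) (p : ℝ) {w z : ℝ} (hw : 0 < w) :
    betaM a b {x | x ^ p * (w + z) > w} = ENNReal.ofReal (betaTail a b p (z / w)) := by
  have := isProbabilityMeasure_betaM ha hb
  rw [betaTail, ofReal_measureReal]
  refine measure_congr ?_
  filter_upwards [betaM_ae_mem_Ioo a b] with x hx
  have hx0 : 0 < x := hx.1
  refine propext ?_
  change w < x ^ p * (w + z) ↔ 0 < x ∧ 1 < x ^ p * (1 + z / w)
  rw [show x ^ p * (1 + z / w) = x ^ p * (w + z) / w by field_simp, one_lt_div hw]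
  simp [hx0]

/-! ### Reduction to integrals over the half-line -/

/-- The substitution `y = w + z` in the Gamma density, for a function supported on `(w, ∞)`. -/
lemma lintegral_gammaM {r w : ℝ} (hr : 0 < r) (hw : 0 < w) {G : ℝ → ℝ} (hG : Measurable G)
    (h0 : ∀ t, 0 ≤ G t) {f : ℝ → ENNReal} (hf : Measurable f) (hle : ∀ y ≤ w, f y = 0)
    (hgt : ∀ y, w < y → f y = ENNReal.ofReal (G ((y - w) / w))) :
    (∫⁻ y, f y ∂gammaM r).toReal = w ^ (r - 1) * exp (-w) / Real.Gamma r *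
      ∫ z in Ioi (0 : ℝ), (1 + z / w) ^ (r - 1) * exp (-z) * G (z / w) := by
  have hΓ := Gamma_pos_of_pos hr
  have hd : Measurable fun x : ℝ => ENNReal.ofReal
      (if 0 < x then x ^ (r - 1) * Real.exp (-x) / Real.Gamma r else 0) :=
    (Measurable.ite measurableSet_Ioi (by fun_prop) (by fun_prop)).ennreal_ofReal
  rw [gammaM, lintegral_withDensity_eq_lintegral_mul _ hd hf,
    ← lintegral_add_right_eq_self _ w, ← integral_const_mul,
    integral_eq_lintegral_of_nonneg_ae ?_ (by fun_prop), ← lintegral_indicator measurableSet_Ioi]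
  · congr 2 with z
    rcases le_or_gt z 0 with hz | hz
    · rw [indicator_of_notMem (by simpa using hz), Pi.mul_apply, hle _ (by linarith), mul_zero]
    · have hwz : 0 < w + z := by positivity
      have hwz' : 0 < 1 + z / w := by positivity
      rw [indicator_of_mem (by simpa using hz), Pi.mul_apply, hgt _ (by linarith),
        if_pos (by linarith), ← ENNReal.ofReal_mul (by positivity), add_sub_cancel_right]
      congr 1
      rw [show z + w = w * (1 + z / w) by field_simp; ring, mul_rpow hw.le hwz'.le,
        show w * (1 + z / w) = w + z by field_simp, neg_add, exp_add]
      ring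
  · refine (ae_restrict_iff' measurableSet_Ioi).2 (ae_of_all _ fun z (hz : 0 < z) => ?_)
    have := h0 (z / w)
    simp only [Pi.zero_apply]
    positivity

lemma lintegral_expM {w : ℝ} {G : ℝ → ℝ} (hG : Measurable G)
    (h0 : ∀ t, 0 ≤ G t) {f : ℝ → ENNReal} (hf : Measurable f)
    (hgt : ∀ z, f z = ENNReal.ofReal (G (z / w))) :
    (∫⁻ z, f z ∂expM).toReal = ∫ z in Ioi (0 : ℝ), exp (-z) * G (z / w) := by
  have hd : Measurable fun x : ℝ => ENNReal.ofReal (if 0 < x then Real.exp (-x) else 0) :=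
    (Measurable.ite measurableSet_Ioi (by fun_prop) (by fun_prop)).ennreal_ofReal
  rw [expM, lintegral_withDensity_eq_lintegral_mul _ hd hf,
    integral_eq_lintegral_of_nonneg_ae
      (ae_of_all _ fun z => mul_nonneg (exp_pos _).le (h0 _)) (by fun_prop),
    ← lintegral_indicator measurableSet_Ioi]
  congr 2 with z
  rcases le_or_gt z 0 with hz | hz
  · rw [indicator_of_notMem (by simpa using hz), Pi.mul_apply, if_neg hz.not_gt]
    simp
  · rw [indicator_of_mem (by simpa using hz), Pi.mul_apply, hgt, if_pos hz,
      ← ENNReal.ofReal_mul (exp_pos _).le]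

/-- An event that depends only on the first two of three independent variables. -/
lemma prod_apply_fst (β γ ε : Measure ℝ) [IsProbabilityMeasure β] [IsProbabilityMeasure γ]
    [IsProbabilityMeasure ε] {S : Set (ℝ × ℝ)} (hS : MeasurableSet S) :
    (β.prod (γ.prod ε)) {q | (q.1, q.2.1) ∈ S} = ∫⁻ y, β {x | (x, y) ∈ S} ∂γ := by
  rw [Measure.prod_apply_symm (by measurability)]
  exact (measurePreserving_fst (μ := γ) (ν := ε)).lintegral_comp
    (measurable_measure_prodMk_right hS)

/-- An event that depends only on the first and third of three independent variables. -/
lemma prod_apply_snd (β γ ε : Measure ℝ) [IsProbabilityMeasure β] [IsProbabilityMeasure γ]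
    [IsProbabilityMeasure ε] {S : Set (ℝ × ℝ)} (hS : MeasurableSet S) :
    (β.prod (γ.prod ε)) {q | (q.1, q.2.2) ∈ S} = ∫⁻ y, β {x | (x, y) ∈ S} ∂ε := by
  rw [Measure.prod_apply_symm (by measurability)]
  exact (measurePreserving_snd (μ := γ) (ν := ε)).lintegral_comp
    (measurable_measure_prodMk_right hS)

/-! ### The asymptotic equivalence -/

theorem cond_prob_asymptotic (a b c p : ℝ) (ha : 0 < a) (hb : 0 < b) (hc : 0 < c) (hp : 0 < p) :
    Tendsto (fun w : ℝ =>
        ((((betaM a b).prod ((gammaM (c / p)).prod expM))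
            {q : ℝ × ℝ × ℝ | q.1 ^ p * q.2.1 > w ∧ q.2.1 > w}).toReal /
          (((betaM a b).prod ((gammaM (c / p)).prod expM))
            {q : ℝ × ℝ × ℝ | q.2.1 > w}).toReal) /
        (((betaM a b).prod ((gammaM (c / p)).prod expM))
            {q : ℝ × ℝ × ℝ | q.1 ^ p * (w + q.2.2) > w}).toReal)
      atTop (nhds 1) := by
  have hr : 0 < c / p := by positivity
  have := isProbabilityMeasure_betaM ha hb
  have := isProbabilityMeasure_gammaM hr
  have := isProbabilityMeasure_expM
  have hmono := betaTail_mono ha hb p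
  have hnn : ∀ t, 0 ≤ betaTail a b p t := fun t => measureReal_nonneg
  have h1 := tilted_ratio_tendsto_one (betaTail a b p) hmono hnn
    (fun t => measureReal_le_one) (fun t ht => betaTail_pos ha hb hp ht) (c / p - 1)
  have h2 := tilted_ratio_tendsto_one (fun _ => 1) monotone_const
    (fun t => zero_le_one) (fun t => le_rfl) (fun t _ => one_pos) (c / p - 1)
  have h := h1.div h2 one_ne_zero
  rw [div_one] at h
  refine h.congr' ?_
  filter_upwards [eventually_gt_atTop 0] with w hw
  have hS1 : MeasurableSet {q : ℝ × ℝ | q.1 ^ p * q.2 > w ∧ q.2 > w} :=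
    (measurableSet_lt (f := fun _ : ℝ × ℝ => w) (g := fun q => q.1 ^ p * q.2)
      (by fun_prop) (by fun_prop)).inter
      (measurableSet_lt (f := fun _ : ℝ × ℝ => w) (g := fun q => q.2) (by fun_prop) (by fun_prop))
  have hS2 : MeasurableSet {q : ℝ × ℝ | q.2 > w} := measurableSet_lt (by fun_prop) (by fun_prop)
  have hS3 : MeasurableSet {q : ℝ × ℝ | q.1 ^ p * (w + q.2) > w} :=
    measurableSet_lt (by fun_prop) (by fun_prop)
  have e1 := prod_apply_fst (betaM a b) (gammaM (c / p)) expM hS1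
  have e2 := prod_apply_fst (betaM a b) (gammaM (c / p)) expM hS2
  have e3 := prod_apply_snd (betaM a b) (gammaM (c / p)) expM hS3
  have m1 : Measurable fun y => betaM a b {x | x ^ p * y > w ∧ y > w} :=
    measurable_measure_prodMk_right hS1
  have m2 : Measurable fun y => betaM a b {_x | y > w} := measurable_measure_prodMk_right hS2
  have m3 : Measurable fun y => betaM a b {x | x ^ p * (w + y) > w} :=
    measurable_measure_prodMk_right hS3
  simp only [mem_ofPred_eq] at e1 e2 e3
  rw [e1, e2, e3]
  rw [lintegral_gammaM hr hw hmono.measurable hnn m1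
      (fun y hy => by simp [not_lt.2 hy]) (fun y hy => by
        rw [← betaM_section ha hb p hw]
        simp [hy]),
    lintegral_gammaM hr hw (G := fun _ => 1) measurable_const (fun _ => zero_le_one)
      m2
      (fun y hy => by simp [not_lt.2 hy]) (fun y hy => by simp [hy]),
    lintegral_expM hmono.measurable hnn m3
      (fun z => betaM_section ha hb p hw)]
  have hk : w ^ (c / p - 1) * exp (-w) / Real.Gamma (c / p) ≠ 0 := by
    have := Gamma_pos_of_pos hr
    positivity
  rw [mul_div_mul_left _ _ hk]
  simp only [Pi.div_apply, mul_one, integral_exp_neg_Ioi_zero, div_one]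
  exact div_right_comm _ _ _
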